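/- Let F be a field, L a Lie algebra over F, and J a Lie ideal of L. Let W ⊆ J be a subset such that J is generated as a Lie subalgebra of L by W and such that the canonical Lie algebra homomorphism from the free Lie algebra FreeLie_F(W) to L, sending each generator to the corresponding element of W, is injective with range J (so that J is a free Lie algebra on W). Let A = U(L) be the universal enveloping algebra of L with canonical map ι : L → A, and let I be the two-sided ideal of A generated by ι(J). Then the multiplication map ⊕_{w ∈ W} A → I, (a_w)_{w} ↦ Σ_w a_w·ι(w), is an isomorphism of left A-modules, and the multiplication map ⊕_{w ∈ W} A → I, (a_w)_{w} ↦ Σ_w ι(w)·a_w, is an isomorphism of right A-modules; i.e. I is free as a left A-module and as a right A-module on the basis ι(W). -/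

import Mathlib

namespace PBW

section
variable {I : Type*} [LinearOrder I]

def inv : List I → ℕ
  | [] => 0
  | a :: l => l.countP (fun x => decide (x < a)) + inv l

lemma inv_swap (u : List I) {j k : I} (v : List I) (h : k < j) :
    inv (u ++ k :: j :: v) < inv (u ++ j :: k :: v) := by
  induction u with
  | nil =>
    have h' : ¬ j < k := not_lt.mpr h.le
    simp [inv, h, h']
    omega
  | cons a u ih =>
    simp only [List.cons_append, inv]
    have : (u ++ k :: j :: v).Perm (u ++ j :: k :: v) :=
      List.Perm.append_left _ (List.Perm.swap _ _ _)
    rw [this.countP_eq]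
    omega

def IsDesc (l : List I) (d : List I × I × I × List I) : Prop :=
  l = d.1 ++ d.2.1 :: d.2.2.1 :: d.2.2.2 ∧ d.2.2.1 < d.2.1

lemma exists_desc (l : List I) (h : ¬ l.Pairwise (· ≤ ·)) : ∃ d, IsDesc l d := by
  induction l with
  | nil => simp at h
  | cons a l ih =>
    by_cases hl : l.Pairwise (· ≤ ·)
    · cases l with
      | nil => simp at h
      | cons c l =>
        by_cases hac : a ≤ c
        · exfalso
          apply h
          rw [List.pairwise_cons]
          refine ⟨?_, hl⟩
          intro x hx
          rcases List.mem_cons.1 hx with rfl | hx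
          · exact hac
          · exact hac.trans ((List.pairwise_cons.1 hl).1 x hx)
        · exact ⟨([], a, c, l), rfl, not_le.1 hac⟩
    · obtain ⟨⟨u, j, k, v⟩, h1, h2⟩ := ih hl
      exact ⟨(a :: u, j, k, v), by simpa using h1, h2⟩

lemma not_desc (l : List I) (h : l.Pairwise (· ≤ ·)) : ¬ ∃ d, IsDesc l d := by
  rintro ⟨⟨u, j, k, v⟩, h1, h2⟩
  simp only at h1 h2
  rw [h1, List.pairwise_append, List.pairwise_cons] at h
  exact absurd (h.2.1.1 k (by simp)) (not_le.2 h2)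
end

variable {F L I : Type*} [Field F] [LieRing L] [LieAlgebra F L] [LinearOrder I]
  (b : Module.Basis I F L)

open Classical in
noncomputable def N (l : List I) : List I →₀ F :=
  if h : ∃ d, IsDesc l d then
    N (h.choose.1 ++ h.choose.2.2.1 :: h.choose.2.1 :: h.choose.2.2.2) +
      (b.repr ⁅b h.choose.2.1, b h.choose.2.2.1⁆).sum
        (fun i a => a • N (h.choose.1 ++ i :: h.choose.2.2.2))
  else Finsupp.single l 1
termination_by (l.length, inv l)
decreasing_by
  · have := h.choose_spec
    generalize h.choose = d at this
    obtain ⟨h1, h2⟩ := this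
    subst h1
    have := inv_swap d.1 d.2.2.2 h2
    simp only [Prod.lex_def]
    right
    exact ⟨by simp, this⟩
  · have := h.choose_spec
    generalize h.choose = d at this
    obtain ⟨h1, _⟩ := this
    subst h1
    simp only [Prod.lex_def]
    left
    simp

/-- linear extension in one slot -/
noncomputable def E (u v : List I) : L →ₗ[F] (List I →₀ F) :=
  b.constr F (fun i => N b (u ++ i :: v))

noncomputable def E2 (u m v : List I) : L →ₗ[F] L →ₗ[F] (List I →₀ F) :=
  b.constr F (fun i => E b (u ++ i :: m) v)

lemma E_basis (u v : List I) (i : I) : E b u v (b i) = N b (u ++ i :: v) := by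
  simp [E]

lemma E2_basis (u m v : List I) (i : I) : E2 b u m v (b i) = E b (u ++ i :: m) v := by
  simp [E2]

lemma N_sorted {l : List I} (h : l.Pairwise (· ≤ ·)) : N b l = Finsupp.single l 1 := by
  rw [N, dif_neg (not_desc l h)]

lemma N_unfold {l : List I} (h : ∃ d, IsDesc l d) : ∃ u j k v, l = u ++ j :: k :: v ∧ k < j ∧
    N b l = N b (u ++ k :: j :: v) + E b u v ⁅b j, b k⁆ := by
  refine ⟨h.choose.1, h.choose.2.1, h.choose.2.2.1, h.choose.2.2.2, h.choose_spec.1,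
    h.choose_spec.2, ?_⟩
  rw [N, dif_pos h, E, Module.Basis.constr_apply]

lemma E2_comm (u m v : List I) (x y : L) :
    E2 b u m v x y =
      b.constr F (fun i => E b u (m ++ i :: v)) y x := by
  have : E2 b u m v = (b.constr F (fun i => E b u (m ++ i :: v))).flip := by
    apply b.ext
    intro i
    apply b.ext
    intro j
    simp [E2_basis, E_basis]
  rw [this]; rfl

def Good (l : List I) : Prop := ∀ u j k v, l = u ++ j :: k :: v → k < j →
  N b l = N b (u ++ k :: j :: v) + E b u v ⁅b j, b k⁆

lemma rel_of_good {u v : List I} {j k : I} (h1 : Good b (u ++ j :: k :: v))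
    (h2 : Good b (u ++ k :: j :: v)) :
    N b (u ++ j :: k :: v) = N b (u ++ k :: j :: v) + E b u v ⁅b j, b k⁆ := by
  rcases lt_trichotomy k j with h | h | h
  · exact h1 u j k v rfl h
  · subst h; simp
  · rw [h2 u k j v rfl h, ← lie_skew (b j) (b k), map_neg]
    abel

/-- comparison of adjacent slots -/
lemma E2_lie {u v : List I} {n : ℕ} (hn : u.length + v.length + 2 = n)
    (IH : ∀ l : List I, l.length = n → Good b l) (x y : L) :
    E2 b u [] v x y = E2 b u [] v y x + E b u v ⁅x, y⁆ := by
  have : E2 b u [] v = (E2 b u [] v).flip +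
      (LieModule.toEnd F L L : L →ₗ[F] L →ₗ[F] L).compr₂ (E b u v) := by
    apply b.ext
    intro i
    apply b.ext
    intro j
    simp only [LinearMap.add_apply, LinearMap.flip_apply, E2_basis, E_basis,
      LinearMap.compr₂_apply, List.append_assoc, List.cons_append, List.nil_append]
    apply rel_of_good <;> apply IH <;> simp <;> omega
  conv_lhs => rw [this]
  rfl

lemma conf_far (l : List I)
    (IH1 : ∀ l' : List I, l'.length < l.length → Good b l')
    (IH2 : ∀ l' : List I, l'.length = l.length → inv l' < inv l → Good b l')
    (u m v : List I) (j k p q : I) (hl : l = u ++ j :: k :: (m ++ p :: q :: v))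
    (h1 : k < j) (h2 : q < p) :
    N b (u ++ k :: j :: (m ++ p :: q :: v)) + E b u (m ++ p :: q :: v) ⁅b j, b k⁆ =
    N b (u ++ j :: k :: (m ++ q :: p :: v)) + E b (u ++ j :: k :: m) v ⁅b p, b q⁆ := by
  have e1 : N b (u ++ k :: j :: (m ++ p :: q :: v)) =
      N b (u ++ k :: j :: (m ++ q :: p :: v)) + E b (u ++ k :: j :: m) v ⁅b p, b q⁆ := by
    have := IH2 (u ++ k :: j :: (m ++ p :: q :: v)) (by simp [hl])
      (by rw [hl]; exact inv_swap _ _ h1) (u ++ k :: j :: m) p q v (by simp) h2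
    simpa using this
  have e2 : N b (u ++ j :: k :: (m ++ q :: p :: v)) =
      N b (u ++ k :: j :: (m ++ q :: p :: v)) + E b u (m ++ q :: p :: v) ⁅b j, b k⁆ := by
    refine IH2 (u ++ j :: k :: (m ++ q :: p :: v)) (by simp [hl])
      ?_ u j k _ rfl h1
    have := inv_swap (u ++ j :: k :: m) v h2
    rw [hl]; simpa using this
  have e3 : E b u (m ++ p :: q :: v) = E b u (m ++ q :: p :: v) +
      (E2 b u m v).flip ⁅b p, b q⁆ := by
    apply b.ext
    intro i
    simp only [LinearMap.add_apply, LinearMap.flip_apply, E2_basis, E_basis]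
    have := IH1 (u ++ i :: (m ++ p :: q :: v)) (by simp [hl]) (u ++ i :: m) p q v (by simp) h2
    simpa using this
  have e4 : E b (u ++ j :: k :: m) v = E b (u ++ k :: j :: m) v + E2 b u m v ⁅b j, b k⁆ := by
    apply b.ext
    intro i
    rw [LinearMap.add_apply, E2_comm, Module.Basis.constr_basis]
    simp only [E_basis]
    have := IH1 (u ++ j :: k :: (m ++ i :: v)) (by simp [hl]) u j k _ rfl h1
    simpa using this
  rw [e1, e2, e3, e4]
  simp only [LinearMap.add_apply, LinearMap.flip_apply]
  abel

lemma conf_near (l : List I)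
    (IH1 : ∀ l' : List I, l'.length < l.length → Good b l')
    (IH2 : ∀ l' : List I, l'.length = l.length → inv l' < inv l → Good b l')
    (u v : List I) (a j k : I) (hl : l = u ++ a :: j :: k :: v)
    (h1 : j < a) (h2 : k < j) :
    N b (u ++ j :: a :: k :: v) + E b u (k :: v) ⁅b a, b j⁆ =
    N b (u ++ a :: k :: j :: v) + E b (u ++ [a]) v ⁅b j, b k⁆ := by
  have i1 : inv (u ++ j :: a :: k :: v) < inv l := by rw [hl]; exact inv_swap _ _ h1
  have i2 : inv (u ++ a :: k :: j :: v) < inv l := by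
    rw [hl]; have := inv_swap (u ++ [a]) v h2; simpa using this
  have i3 : inv (u ++ j :: k :: a :: v) < inv l := by
    refine lt_trans ?_ i1; have := inv_swap (u ++ [j]) v (h2.trans h1); simpa using this
  have i4 : inv (u ++ k :: a :: j :: v) < inv l :=
    lt_trans (inv_swap u _ (h2.trans h1)) i2
  have e1 : N b (u ++ j :: a :: k :: v) = N b (u ++ j :: k :: a :: v) +
      E2 b u [] v (b j) ⁅b a, b k⁆ := by
    have := IH2 _ (by simp [hl]) i1 (u ++ [j]) a k v (by simp) (h2.trans h1)
    simpa [E2_basis] using this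
  have e2 : N b (u ++ j :: k :: a :: v) = N b (u ++ k :: j :: a :: v) +
      E2 b u [] v ⁅b j, b k⁆ (b a) := by
    rw [E2_comm, Module.Basis.constr_basis]
    exact IH2 _ (by simp [hl]) i3 u j k _ (by simp) h2
  have e3 : N b (u ++ a :: k :: j :: v) = N b (u ++ k :: a :: j :: v) +
      E2 b u [] v ⁅b a, b k⁆ (b j) := by
    rw [E2_comm, Module.Basis.constr_basis]
    exact IH2 _ (by simp [hl]) i2 u a k _ (by simp) (h2.trans h1)
  have e4 : N b (u ++ k :: a :: j :: v) = N b (u ++ k :: j :: a :: v) +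
      E2 b u [] v (b k) ⁅b a, b j⁆ := by
    have := IH2 _ (by simp [hl]) i4 (u ++ [k]) a j v (by simp) h1
    simpa [E2_basis] using this
  have e5 : E b u (k :: v) ⁅b a, b j⁆ = E2 b u [] v ⁅b a, b j⁆ (b k) := by
    rw [E2_comm, Module.Basis.constr_basis]; rfl
  have e6 : E b (u ++ [a]) v ⁅b j, b k⁆ = E2 b u [] v (b a) ⁅b j, b k⁆ := by
    rw [E2_basis]
  have key := E2_lie b (u := u) (v := v) rfl (fun l' h => IH1 l' (by simp [hl, h]; omega))
  rw [e1, e2, e3, e4, e5, e6, key ⁅b j, b k⁆ (b a), key (b j) ⁅b a, b k⁆, key ⁅b a, b j⁆ (b k)]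
  have jac : ⁅⁅b j, b k⁆, b a⁆ + ⁅b j, ⁅b a, b k⁆⁆ + ⁅⁅b a, b j⁆, b k⁆ = 0 := by
    rw [← lie_skew ⁅b j, b k⁆ (b a), lie_lie (b a) (b j) (b k), leibniz_lie (b a) (b j) (b k),
      lie_lie (b a) (b j) (b k)]
    abel
  have jac' := congrArg (E b u v) jac
  simp only [map_add, map_zero] at jac'
  have : ∀ (A B C D P Q R : List I →₀ F), P + Q + R = 0 → A + (B + P) + (C + Q) + (D + R) =
    A + D + C + B := by
    intro A B C D P Q R h
    have : A + (B + P) + (C + Q) + (D + R) = A + D + C + B + (P + Q + R) := by abel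
    rw [this, h, add_zero]
  exact this _ _ _ _ _ _ _ jac'

lemma conf (l : List I)
    (IH1 : ∀ l' : List I, l'.length < l.length → Good b l')
    (IH2 : ∀ l' : List I, l'.length = l.length → inv l' < inv l → Good b l')
    (u v u' v' : List I) (j k j' k' : I) (hl : l = u ++ j :: k :: v)
    (hl' : l = u' ++ j' :: k' :: v') (h1 : k < j) (h2 : k' < j') :
    N b (u ++ k :: j :: v) + E b u v ⁅b j, b k⁆ =
    N b (u' ++ k' :: j' :: v') + E b u' v' ⁅b j', b k'⁆ := by
  wlog hlen : u.length ≤ u'.length generalizing u v u' v' j k j' k'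
  · exact (this u' v' u v j' k' j k hl' hl h2 h1 (by omega)).symm
  have h := hl.symm.trans hl'
  rw [List.append_eq_append_iff] at h
  rcases h with ⟨t, rfl, ht⟩ | ⟨t, rfl, ht⟩
  · match t, ht with
    | [], ht =>
      simp at ht
      obtain ⟨rfl, rfl, rfl⟩ := ht
      simp
    | [x], ht =>
      simp at ht
      obtain ⟨rfl, rfl, rfl⟩ := ht
      have := conf_near b l IH1 IH2 u v' j k k' hl h1 h2
      simpa using this
    | x :: y :: m, ht =>
      simp at ht
      obtain ⟨rfl, rfl, rfl⟩ := ht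
      have := conf_far b l IH1 IH2 u m v' j k j' k' hl h1 h2
      simpa using this
  · have : t = [] := by
      simpa using hlen
    subst this
    simp at ht
    obtain ⟨rfl, rfl, rfl⟩ := ht
    simp

lemma good_aux (n : ℕ) : ∀ (s : ℕ) (l : List I), l.length = n → inv l = s → Good b l := by
  induction n using Nat.strong_induction_on with
  | _ n ihn =>
  intro s
  induction s using Nat.strong_induction_on with
  | _ s ihs =>
  intro l hn hs u j k v hl h1
  obtain ⟨u', j', k', v', hl', h2, e⟩ := N_unfold b ⟨(u, j, k, v), hl, h1⟩
  rw [e]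
  exact conf b l (fun l' h => ihn _ (hn ▸ h) _ l' rfl rfl)
    (fun l' h h' => ihs _ (hs ▸ h') l' (h.trans hn) rfl) u' v' u v j' k' j k hl' hl h2 h1

lemma good (l : List I) : Good b l := good_aux b _ _ l rfl rfl

lemma N_rel (u v : List I) (j k : I) :
    N b (u ++ j :: k :: v) = N b (u ++ k :: j :: v) + E b u v ⁅b j, b k⁆ :=
  rel_of_good b (good b _) (good b _)

/-- well-founded induction on words -/
lemma word_induction {P : List I → Prop}
    (hs : ∀ l : List I, l.Pairwise (· ≤ ·) → P l)
    (hd : ∀ u j k v, k < j → P (u ++ k :: j :: v) → (∀ i, P (u ++ i :: v)) →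
      P (u ++ j :: k :: v)) : ∀ l, P l := by
  have aux : ∀ n s (l : List I), l.length = n → inv l = s → P l := by
    intro n
    induction n using Nat.strong_induction_on with
    | _ n ihn =>
    intro s
    induction s using Nat.strong_induction_on with
    | _ s ihs =>
    intro l hn hs'
    by_cases h : l.Pairwise (· ≤ ·)
    · exact hs l h
    · obtain ⟨⟨u, j, k, v⟩, h1, h2⟩ := exists_desc l h
      simp only at h1 h2
      subst h1
      refine hd u j k v h2 ?_ ?_
      · exact ihs _ (hs' ▸ inv_swap _ _ h2) _ (by rw [← hn]; simp) rfl
      · intro i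
        exact ihn _ (by rw [← hn]; simp) _ _ rfl rfl
  exact fun l => aux _ _ l rfl rfl

noncomputable def rho : L →ₗ[F] Module.End F (List I →₀ F) :=
  b.constr F (fun i => Finsupp.linearCombination F (fun l => N b (i :: l)))

lemma rho_basis_single (i : I) (l : List I) : rho b (b i) (Finsupp.single l 1) = N b (i :: l) := by
  simp [rho]

lemma rho_single (x : L) (l : List I) : rho b x (Finsupp.single l 1) = E b [] l x := by
  have : (LinearMap.flip (rho b)) (Finsupp.single l 1) = E b [] l := by
    apply b.ext
    intro i
    rw [LinearMap.flip_apply, rho_basis_single, E_basis]; rfl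
  rw [← this]; rfl

lemma rho_N (i : I) (l : List I) : rho b (b i) (N b l) = N b (i :: l) := by
  induction l using word_induction with
  | hs l h => rw [N_sorted b h, rho_basis_single]
  | hd u j k v h h1 h2 =>
    rw [N_rel, map_add, h1]
    have : (rho b (b i)) ∘ₗ E b u v = E b (i :: u) v := by
      apply b.ext
      intro i'
      rw [LinearMap.comp_apply, E_basis, h2, E_basis]; rfl
    rw [← LinearMap.comp_apply, this]
    exact (N_rel b (i :: u) v j k).symm

attribute [local instance] LieRing.ofAssociativeRing

lemma rho_lie (x y : L) : rho b ⁅x, y⁆ = rho b x * rho b y - rho b y * rho b x := by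
  have : (LieModule.toEnd F L L : L →ₗ[F] L →ₗ[F] L).compr₂ (rho b) +
     ((LinearMap.mul F (Module.End F (List I →₀ F))).compl₁₂ (rho b) (rho b)).flip =
     (LinearMap.mul F (Module.End F (List I →₀ F))).compl₁₂ (rho b) (rho b) := by
    apply b.ext
    intro i
    apply b.ext
    intro j
    apply Finsupp.lhom_ext'
    intro l
    apply LinearMap.ext_ring
    simp only [LinearMap.compr₂_apply, LinearMap.add_apply, LinearMap.flip_apply,
      LinearMap.compl₁₂_apply, LinearMap.mul_apply', LinearMap.comp_apply, Finsupp.lsingle_apply,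
      Module.End.mul_apply, rho_basis_single, rho_N]
    rw [eq_comm, add_comm]
    refine (N_rel b [] l i j).trans ?_
    congr 1
    exact (rho_single b _ l).symm
  have h := LinearMap.congr_fun (LinearMap.congr_fun this x) y
  apply LinearMap.ext
  intro q
  have h2 := LinearMap.congr_fun h q
  change rho b ⁅x, y⁆ q = rho b x (rho b y q) - rho b y (rho b x q)
  exact eq_sub_of_add_eq h2

noncomputable def rhoLie : L →ₗ⁅F⁆ Module.End F (List I →₀ F) :=
  { rho b with
    map_lie' := fun {x y} => by
      simpa [LieRing.of_associative_ring_bracket] using rho_lie b x y }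

open UniversalEnvelopingAlgebra

noncomputable def mon (l : List I) : UniversalEnvelopingAlgebra F L :=
  (l.map fun i => ι F (b i)).prod

noncomputable def nf : UniversalEnvelopingAlgebra F L →ₗ[F] (List I →₀ F) :=
  (LinearMap.applyₗ (Finsupp.single [] 1)) ∘ₗ (lift F (rhoLie b)).toLinearMap

lemma nf_mon (l : List I) : nf b (mon b l) = N b l := by
  induction l with
  | nil => simp [nf, mon, N_sorted]
  | cons i l ih =>
    rw [← rho_N, ← ih]
    have : lift F (rhoLie b) (ι F (b i)) = rho b (b i) := lift_ι_apply F (rhoLie b) (b i)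
    simp only [nf, mon, List.map_cons, List.prod_cons, LinearMap.comp_apply,
      AlgHom.toLinearMap_apply, map_mul, this]
    rfl

lemma adjoin_ι : Algebra.adjoin F (Set.range (ι F (L := L))) = ⊤ := by
  have h : Function.Surjective (mkAlgHom F L) := RingCon.mkₐ_surjective _
  have h2 := congrArg (Subalgebra.map (mkAlgHom F L)) (TensorAlgebra.adjoin_range_ι (R := F) (M := L))
  rw [AlgHom.map_adjoin, Algebra.map_top, (AlgHom.range_eq_top _).2 h, ← Set.range_comp] at h2
  exact h2

lemma mon_rel (u v : List I) (j k : I) : mon b (u ++ j :: k :: v) = mon b (u ++ k :: j :: v) +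
    b.constr F (fun i => mon b (u ++ i :: v)) ⁅b j, b k⁆ := by
  have : b.constr F (fun i => mon b (u ++ i :: v)) =
      (LinearMap.mulLeft F (mon b u)) ∘ₗ (LinearMap.mulRight F (mon b v)) ∘ₗ
        (ι F (L := L) : L →ₗ[F] UniversalEnvelopingAlgebra F L) := by
    apply b.ext
    intro i
    simp [mon]
  rw [this]
  simp only [LinearMap.comp_apply, LieHom.coe_toLinearMap, LieHom.map_lie,
    LieRing.of_associative_ring_bracket]
  simp only [mon, List.map_append, List.prod_append, List.map_cons, List.prod_cons,
    LinearMap.mulLeft_apply, LinearMap.mulRight_apply]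
  noncomm_ring

abbrev Srt (I : Type*) [LinearOrder I] := {l : List I // l.Pairwise (· ≤ ·)}

lemma mon_mem (l : List I) : mon b l ∈ Submodule.span F (Set.range fun s : Srt I => mon b s.1) := by
  induction l using word_induction with
  | hs l h => exact Submodule.subset_span ⟨⟨l, h⟩, rfl⟩
  | hd u j k v h h1 h2 =>
    rw [mon_rel]
    refine add_mem h1 ?_
    rw [Module.Basis.constr_apply]
    exact Submodule.sum_mem _ fun i _ => Submodule.smul_mem _ _ (h2 i)

lemma span_mon : Submodule.span F (Set.range fun s : Srt I => mon b s.1) = ⊤ := by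
  have h1 : Submodule.span F (Set.range (mon b)) ≤
      Submodule.span F (Set.range fun s : Srt I => mon b s.1) := by
    rw [Submodule.span_le]
    rintro _ ⟨l, rfl⟩
    exact mon_mem b l
  refine top_unique (le_trans ?_ h1)
  have hmul : ∀ x : L, ∀ a ∈ Submodule.span F (Set.range (mon b)),
      ι F x * a ∈ Submodule.span F (Set.range (mon b)) := by
    intro x a ha
    induction ha using Submodule.span_induction with
    | zero => simp
    | add a c _ _ h1 h2 => rw [mul_add]; exact add_mem h1 h2
    | smul r a _ h => rw [mul_smul_comm]; exact Submodule.smul_mem _ _ h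
    | mem a ha =>
      obtain ⟨l, rfl⟩ := ha
      have : ι F x * mon b l = b.constr F (fun i => mon b (i :: l)) x := by
        have : b.constr F (fun i => mon b (i :: l)) =
          (LinearMap.mulRight F (mon b l)) ∘ₗ
            (ι F (L := L) : L →ₗ[F] UniversalEnvelopingAlgebra F L) := by
          apply b.ext
          intro i
          simp [mon]
        rw [this]; rfl
      rw [this, Module.Basis.constr_apply]
      exact Submodule.sum_mem _ fun i _ => Submodule.smul_mem _ _ (Submodule.subset_span ⟨_, rfl⟩)
  intro a _
  have ha : a ∈ Algebra.adjoin F (Set.range (ι F (L := L))) := by rw [adjoin_ι]; trivial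
  have h3 : ∀ c ∈ Submodule.span F (Set.range (mon b)),
      a * c ∈ Submodule.span F (Set.range (mon b)) := by
    induction ha using Algebra.adjoin_induction with
    | mem x hx => obtain ⟨x, rfl⟩ := hx; exact hmul x
    | algebraMap r => intro c hc; rw [← Algebra.smul_def]; exact Submodule.smul_mem _ _ hc
    | add x y _ _ h1 h2 => intro c hc; rw [add_mul]; exact add_mem (h1 trivial c hc) (h2 trivial c hc)
    | mul x y _ _ h1 h2 => intro c hc; rw [mul_assoc]; exact h1 trivial _ (h2 trivial c hc)
  have := h3 1 (Submodule.subset_span ⟨[], by simp [mon]⟩)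
  simpa using this

lemma linInd_mon : LinearIndependent F (fun s : Srt I => mon b s.1) := by
  apply LinearIndependent.of_comp (nf b)
  have : (nf b ∘ fun s : Srt I => mon b s.1) =
      (fun l : List I => Finsupp.single l (1 : F)) ∘ (Subtype.val : Srt I → List I) := by
    funext s
    simp [nf_mon, N_sorted b s.2]
  rw [this]
  exact (Finsupp.linearIndependent_single_one F (List I)).comp _ Subtype.val_injective

noncomputable def pbw : Module.Basis (Srt I) F (UniversalEnvelopingAlgebra F L) :=
  Module.Basis.mk (linInd_mon b) (span_mon b).ge

lemma pbw_apply (s : Srt I) : pbw b s = mon b s.1 := by simp [pbw]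

lemma mon_append (u v : List I) : mon b (u ++ v) = mon b u * mon b v := by
  simp [mon]

section theta
variable {IC IJ : Type*} [LinearOrder IC] [LinearOrder IJ]

open Sum in
lemma srt_append (m : List IC) (n : List IJ) (hm : m.Pairwise (· ≤ ·)) (hn : n.Pairwise (· ≤ ·)) :
    (m.map (fun i => toLex (inl i : IC ⊕ IJ)) ++
      n.map (fun i => toLex (inr i : IC ⊕ IJ))).Pairwise (· ≤ ·) := by
  rw [List.pairwise_append]
  refine ⟨?_, ?_, ?_⟩
  · rw [List.pairwise_map]
    exact hm.imp fun h => by simpa using h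
  · rw [List.pairwise_map]
    exact hn.imp fun h => by simpa using h
  · intro a ha c hc
    obtain ⟨i, _, rfl⟩ := List.mem_map.1 ha
    obtain ⟨j, _, rfl⟩ := List.mem_map.1 hc
    exact Sum.Lex.inl_le_inr i j

open Sum in
lemma srt_split (l : List (IC ⊕ₗ IJ)) (h : l.Pairwise (· ≤ ·)) :
    ∃ (m : List IC) (n : List IJ), m.Pairwise (· ≤ ·) ∧ n.Pairwise (· ≤ ·) ∧
      m.map (fun i => toLex (inl i : IC ⊕ IJ)) ++ n.map (fun i => toLex (inr i : IC ⊕ IJ)) = l := by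
  induction l with
  | nil => exact ⟨[], [], by simp, by simp, by simp⟩
  | cons a l ih =>
    rw [List.pairwise_cons] at h
    obtain ⟨m, n, hm, hn, rfl⟩ := ih h.2
    rcases a with i | j
    · refine ⟨i :: m, n, ?_, hn, by simp; rfl⟩
      rw [List.pairwise_cons]
      refine ⟨?_, hm⟩
      intro x hx
      have := h.1 (toLex (inl x)) (by simp [hx])
      exact Sum.Lex.inl_le_inl_iff.1 this
    · have hm0 : m = [] := by
        rw [List.eq_nil_iff_forall_not_mem]
        intro x hx
        have := h.1 (toLex (inl x)) (by simp [hx])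
        exact Sum.Lex.not_inr_le_inl this
      subst hm0
      refine ⟨[], j :: n, by simp, ?_, by simp; rfl⟩
      rw [List.pairwise_cons]
      refine ⟨?_, hn⟩
      intro x hx
      have := h.1 (toLex (inr x)) (by simp [hx])
      exact Sum.Lex.inr_le_inr_iff.1 this

open Sum in
noncomputable def sigmaEquiv : (Σ _ : Srt IC, Srt IJ) ≃ Srt (IC ⊕ₗ IJ) :=
  Equiv.ofBijective
    (fun p => ⟨p.1.1.map (fun i => toLex (inl i : IC ⊕ IJ)) ++
      p.2.1.map (fun i => toLex (inr i : IC ⊕ IJ)), srt_append _ _ p.1.2 p.2.2⟩) (by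
    constructor
    · rintro ⟨⟨m, hm⟩, ⟨n, hn⟩⟩ ⟨⟨m', hm'⟩, ⟨n', hn'⟩⟩ h
      have h : m.map (fun i => toLex (inl i : IC ⊕ IJ)) ++ n.map (fun i => toLex (inr i : IC ⊕ IJ)) =
        m'.map (fun i => toLex (inl i : IC ⊕ IJ)) ++ n'.map (fun i => toLex (inr i : IC ⊕ IJ)) :=
        congrArg Subtype.val h
      have h1 := congrArg (List.filterMap fun x : IC ⊕ₗ IJ => (ofLex x).getLeft?) h
      have h2 := congrArg (List.filterMap fun x : IC ⊕ₗ IJ => (ofLex x).getRight?) h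
      simp [List.filterMap_map, Function.comp_def] at h1 h2
      subst h1
      subst h2
      rfl
    · rintro ⟨l, hl⟩
      obtain ⟨m, n, hm, hn, h⟩ := srt_split l hl
      exact ⟨⟨⟨m, hm⟩, ⟨n, hn⟩⟩, Subtype.ext h⟩)
end theta

noncomputable def phi {L' : Type*} [LieRing L'] [LieAlgebra F L'] (g : L' →ₗ⁅F⁆ L) :
    UniversalEnvelopingAlgebra F L' →ₐ[F] UniversalEnvelopingAlgebra F L :=
  lift F ((ι F (L := L)).comp g)

noncomputable def theta {L' S : Type*} [LieRing L'] [LieAlgebra F L'] (g : L' →ₗ⁅F⁆ L)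
    (c : S → UniversalEnvelopingAlgebra F L) :
    (S →₀ UniversalEnvelopingAlgebra F L') →ₗ[F] UniversalEnvelopingAlgebra F L :=
  Finsupp.lsum ℕ fun s => (LinearMap.mulLeft F (c s)) ∘ₗ (phi g).toLinearMap

lemma phi_ι {L' : Type*} [LieRing L'] [LieAlgebra F L'] (g : L' →ₗ⁅F⁆ L) (x : L') :
    phi g (ι F x) = ι F (g x) := lift_ι_apply F ((ι F (L := L)).comp g) x

lemma exists_theta.{v} {L : Type v} [LieRing L] [LieAlgebra F L] {L' : Type*} [LieRing L'] [LieAlgebra F L'] (g : L' →ₗ⁅F⁆ L)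
    (hg : Function.Injective g) :
    ∃ (S : Type v) (c : S → UniversalEnvelopingAlgebra F L), Function.Bijective (theta g c) := by
  classical
  obtain ⟨C, hC⟩ := Submodule.exists_isCompl (LinearMap.range (g : L' →ₗ[F] L))
  let bC := Module.Basis.ofVectorSpace F C
  let bJ := Module.Basis.ofVectorSpace F L'
  let _ : LinearOrder (Module.Basis.ofVectorSpaceIndex F C) := linearOrderOfSTO WellOrderingRel
  let _ : LinearOrder (Module.Basis.ofVectorSpaceIndex F L') := linearOrderOfSTO WellOrderingRel
  let e : (C × L') ≃ₗ[F] L :=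
    ((LinearEquiv.refl F C).prodCongr (LinearEquiv.ofInjective (g : L' →ₗ[F] L) hg)).trans
      (Submodule.prodEquivOfIsCompl _ _ hC.symm)
  let b := ((bC.prod bJ).map e).reindex toLex
  have hl : ∀ i, b (toLex (Sum.inl i)) = (bC i : L) := by
    intro i; simp [b, e]
  have hr : ∀ i, b (toLex (Sum.inr i)) = g (bJ i) := by
    intro i; simp [b, e]
  refine ⟨Srt (Module.Basis.ofVectorSpaceIndex F C),
    fun m => mon b (m.1.map fun i => toLex (Sum.inl i)), ?_⟩
  let B1 := Finsupp.basis (fun _ : Srt (Module.Basis.ofVectorSpaceIndex F C) => pbw bJ)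
  have hmon : ∀ n : List (Module.Basis.ofVectorSpaceIndex F L'),
      phi g (mon bJ n) = mon b (n.map fun i => toLex (Sum.inr i)) := by
    intro n
    simp only [mon, map_list_prod, List.map_map]
    congr 1
    apply List.map_congr_left
    intro i _
    simp only [Function.comp_apply, phi_ι, hr]
  have key : theta g (fun m : Srt (Module.Basis.ofVectorSpaceIndex F C) =>
      mon b (m.1.map fun i => toLex (Sum.inl i))) =
      (B1.equiv (pbw b) sigmaEquiv : _ →ₗ[F] _) := by
    apply B1.ext
    rintro ⟨m, n⟩
    rw [LinearEquiv.coe_coe, Module.Basis.equiv_apply, pbw_apply]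
    simp only [B1, Finsupp.coe_basis, theta, Finsupp.lsum_single, LinearMap.comp_apply,
      AlgHom.toLinearMap_apply, pbw_apply, hmon, LinearMap.mulLeft_apply, ← mon_append]
    rfl
  rw [key]
  exact (B1.equiv (pbw b) sigmaEquiv).bijective

lemma theta_mul {L' S : Type*} [LieRing L'] [LieAlgebra F L'] (g : L' →ₗ⁅F⁆ L)
    (c : S → UniversalEnvelopingAlgebra F L) (f : S →₀ UniversalEnvelopingAlgebra F L')
    (u : UniversalEnvelopingAlgebra F L') :
    theta g c (Finsupp.mapRange.linearMap (LinearMap.mulRight F u) f) = theta g c f * phi g u := by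
  have : theta g c ∘ₗ Finsupp.mapRange.linearMap (LinearMap.mulRight F u) =
      LinearMap.mulRight F (phi g u) ∘ₗ theta g c := by
    apply Finsupp.lhom_ext'
    intro s
    apply LinearMap.ext
    intro a
    simp only [theta, LinearMap.comp_apply, Finsupp.lsingle_apply,
      Finsupp.mapRange.linearMap_apply, Finsupp.mapRange_single, Finsupp.lsum_single,
      LinearMap.mulRight_apply, LinearMap.mulLeft_apply, AlgHom.toLinearMap_apply, map_mul,
      mul_assoc]
  exact LinearMap.congr_fun this f

lemma free_ind {W : Type*} (T : Finset W)
    (u : W → FreeAlgebra F W) (h : ∑ w ∈ T, u w * FreeAlgebra.ι F w = 0) : ∀ w ∈ T, u w = 0 := by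
  classical
  intro w hw
  let e := FreeAlgebra.equivMonoidAlgebraFreeMonoid (R := F) (X := W)
  have he : ∀ w, e (FreeAlgebra.ι F w) = MonoidAlgebra.single (FreeMonoid.of w) 1 := by
    intro w; simp [e, FreeAlgebra.equivMonoidAlgebraFreeMonoid]
  have h1 := congrArg e h
  simp only [map_sum, map_mul, he, map_zero] at h1
  apply e.injective
  rw [map_zero]
  ext m
  have h2 := congrArg (fun x => MonoidAlgebra.coeff x (m * FreeMonoid.of w)) h1
  simp only [MonoidAlgebra.coeff_sum, MonoidAlgebra.coeff_zero, Finsupp.coe_finsetSum,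
    Finset.sum_apply] at h2
  rw [Finset.sum_eq_single w] at h2
  · rw [MonoidAlgebra.coeff_mul_single_eq_coeff_mul (m₂ := m)] at h2
    · simpa using h2
    · intro a _
      exact mul_left_inj _
  · intro w' _ hne
    apply MonoidAlgebra.coeff_mul_single_of_forall_mul_ne
    intro a h
    apply hne
    have := congrArg (fun l => (FreeMonoid.toList l).getLast?) h
    simpa using this
  · intro h; exact absurd hw h

lemma freeU_ind {W : Type*} (T : Finset W)
    (u : W → UniversalEnvelopingAlgebra F (FreeLieAlgebra F W))
    (h : ∑ w ∈ T, u w * ι F (FreeLieAlgebra.of F w) = 0) : ∀ w ∈ T, u w = 0 := by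
  let e := FreeLieAlgebra.universalEnvelopingEquivFreeAlgebra F W
  have he : ∀ w, e (ι F (FreeLieAlgebra.of F w)) = FreeAlgebra.ι F w := by
    intro w; simp [e]
  have h1 := congrArg e h
  simp only [map_sum, map_mul, he, map_zero] at h1
  intro w hw
  have := free_ind T (fun w => e (u w)) h1 w hw
  simpa using this

lemma left_inj (W : Set L)
    (hinj : Function.Injective ((FreeLieAlgebra.lift F) fun w : W => (w : L))) :
    Function.Injective (Finsupp.linearCombination (UniversalEnvelopingAlgebra F L)
          fun w : W => ι F (w : L)) := by
  classical
  obtain ⟨S, c, hc⟩ := exists_theta _ hinj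
  set g := (FreeLieAlgebra.lift F) fun w : W => (w : L) with hg
  rw [injective_iff_map_eq_zero]
  intro f hf
  choose G hG using hc.2
  rw [Finsupp.linearCombination_apply, Finsupp.sum] at hf
  have h1 : theta g c (∑ w ∈ f.support, Finsupp.mapRange.linearMap
      (LinearMap.mulRight F (ι F (FreeLieAlgebra.of F w))) (G (f w))) = 0 := by
    rw [map_sum, ← hf]
    apply Finset.sum_congr rfl
    intro w _
    rw [theta_mul, hG, phi_ι, smul_eq_mul, hg, FreeLieAlgebra.lift_of_apply]
  rw [map_eq_zero_iff _ hc.1] at h1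
  ext w
  by_contra hw
  apply hw
  rw [Finsupp.zero_apply, ← hG (f w)]
  have : G (f w) = 0 := by
    ext s
    have h2 := DFunLike.congr_fun h1 s
    simp only [Finsupp.coe_finsetSum, Finset.sum_apply, Finsupp.mapRange.linearMap_apply,
      Finsupp.mapRange_apply, LinearMap.mulRight_apply,
      Finsupp.zero_apply] at h2
    exact freeU_ind f.support (fun w => G (f w) s) h2 w (by simpa using hw)
  rw [this, map_zero]

lemma U_induction {P : UniversalEnvelopingAlgebra F L → Prop} (a : UniversalEnvelopingAlgebra F L)
    (h1 : ∀ r, P (algebraMap F _ r)) (h2 : ∀ x, P (ι F x)) (h3 : ∀ x y, P x → P y → P (x + y))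
    (h4 : ∀ x y, P x → P y → P (x * y)) : P a := by
  have ha : a ∈ Algebra.adjoin F (Set.range (ι F (L := L))) := by rw [adjoin_ι]; trivial
  induction ha using Algebra.adjoin_induction with
  | mem x hx => obtain ⟨x, rfl⟩ := hx; exact h2 x
  | algebraMap r => exact h1 r
  | add x y _ _ h h' => exact h3 x y h h'
  | mul x y _ _ h h' => exact h4 x y h h'

lemma left_range (J : LieIdeal F L) (W : Set L)
    (hWJ : W ⊆ (J : Set L))
    (hgen : (J : Set L) ⊆ (LieSubalgebra.lieSpan F L W : Set L)) :
    Set.range ⇑(Finsupp.linearCombination (UniversalEnvelopingAlgebra F L)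
          fun w : W => ι F (w : L)) =
      ((TwoSidedIdeal.span (⇑(ι F (L := L)) '' (J : Set L))) :
        Set (UniversalEnvelopingAlgebra F L)) := by
  rw [← LinearMap.coe_range, Finsupp.range_linearCombination]
  set K := Submodule.span (UniversalEnvelopingAlgebra F L) (Set.range fun w : W => ι F (w : L))
    with hK
  have hW : ∀ w ∈ W, ι F w ∈ K := fun w hw => Submodule.subset_span ⟨⟨w, hw⟩, rfl⟩
  have hJ : ∀ x ∈ J, ι F x ∈ K := by
    intro x hx
    replace hx := hgen hx
    induction hx using LieSubalgebra.lieSpan_induction with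
    | mem x hx => exact hW x hx
    | zero => simp
    | add x y _ _ h1 h2 => rw [map_add]; exact add_mem h1 h2
    | smul r x _ h =>
      rw [map_smul, Algebra.smul_def]
      exact K.smul_mem (algebraMap F (UniversalEnvelopingAlgebra F L) r) h
    | lie x y _ _ h1 h2 =>
      rw [LieHom.map_lie, LieRing.of_associative_ring_bracket]
      exact sub_mem (K.smul_mem _ h2) (K.smul_mem _ h1)
  have hx : ∀ a ∈ K, ∀ x : L, a * ι F x ∈ K := by
    intro a ha x
    induction ha using Submodule.span_induction with
    | zero => simp
    | add a c _ _ h1 h2 => rw [add_mul]; exact add_mem h1 h2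
    | smul r a _ h => rw [smul_eq_mul, mul_assoc]; exact K.smul_mem _ h
    | mem a ha =>
      obtain ⟨w, rfl⟩ := ha
      have : ι F (w : L) * ι F x = ι F x * ι F (w : L) + ι F ⁅(w : L), x⁆ := by
        rw [LieHom.map_lie, LieRing.of_associative_ring_bracket]; abel
      simp only
      rw [this]
      exact add_mem (K.smul_mem _ (hW w w.2)) (hJ _ (lie_mem_left F L J _ _ (hWJ w.2)))
  have hr : ∀ c a, a ∈ K → a * c ∈ K := by
    intro c
    induction c using U_induction with
    | h1 r =>
      intro a ha
      rw [← Algebra.commutes]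
      exact K.smul_mem _ ha
    | h2 x => intro a ha; exact hx a ha x
    | h3 x y h h' => intro a ha; rw [mul_add]; exact add_mem (h a ha) (h' a ha)
    | h4 x y h h' => intro a ha; rw [← mul_assoc]; exact h' _ (h a ha)
  apply Set.Subset.antisymm
  · intro a ha
    induction ha using Submodule.span_induction with
    | zero => exact zero_mem _
    | add a c _ _ h1 h2 => exact add_mem h1 h2
    | smul r a _ h => exact TwoSidedIdeal.mul_mem_left _ _ _ h
    | mem a ha =>
      obtain ⟨w, rfl⟩ := ha
      exact TwoSidedIdeal.subset_span ⟨w, hWJ w.2, rfl⟩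
  · intro a ha
    let T : TwoSidedIdeal (UniversalEnvelopingAlgebra F L) :=
      TwoSidedIdeal.mk' (K : Set _) K.zero_mem (fun h h' => K.add_mem h h') (fun h => K.neg_mem h)
        (fun {x y} h => K.smul_mem x h) (fun {x y} h => hr y x h)
    have hT : ∀ a, a ∈ T ↔ a ∈ K := fun a => by simp [T, TwoSidedIdeal.mem_mk']
    have : a ∈ T := by
      refine (TwoSidedIdeal.mem_span_iff.1 ha) T ?_
      rintro _ ⟨x, hx, rfl⟩
      exact (hT _).2 (hJ x hx)
    exact (hT a).1 this

open MulOpposite in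
noncomputable def anti : UniversalEnvelopingAlgebra F L →ₐ[F] (UniversalEnvelopingAlgebra F L)ᵐᵒᵖ :=
  lift F { toFun := fun x => op (- ι F x)
           map_add' := fun x y => by rw [map_add, neg_add, op_add]
           map_smul' := fun r x => by simp only [map_smul, RingHom.id_apply, ← smul_neg, op_smul]
           map_lie' := fun {x y} => by
            simp only [LieHom.map_lie, LieRing.of_associative_ring_bracket, ← op_mul, ← op_sub]
            congr 1
            noncomm_ring }

open MulOpposite in
lemma anti_ι (x : L) : anti (F := F) (ι F x) = op (- ι F x) := lift_ι_apply F _ x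

open MulOpposite in
lemma anti_anti (a : UniversalEnvelopingAlgebra F L) : unop (anti (unop (anti a))) = a := by
  induction a using U_induction with
  | h1 r => simp [AlgHom.commutes, MulOpposite.algebraMap_apply]
  | h2 x => simp [anti_ι, -ι_apply]
  | h3 x y h h' => simp [h, h']
  | h4 x y h h' => simp [h, h']

open MulOpposite in
lemma anti_mem (J : LieIdeal F L) (a : UniversalEnvelopingAlgebra F L)
    (ha : a ∈ TwoSidedIdeal.span (⇑(ι F (L := L)) '' (J : Set L))) :
    unop (anti a) ∈ TwoSidedIdeal.span (⇑(ι F (L := L)) '' (J : Set L)) := by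
  set T := TwoSidedIdeal.span (⇑(ι F (L := L)) '' (J : Set L)) with hT
  let T' : TwoSidedIdeal (UniversalEnvelopingAlgebra F L) :=
      TwoSidedIdeal.mk' {a | unop (anti a) ∈ T} (by simp)
        (fun h h' => by simpa using T.add_mem h h') (fun h => by simpa using T.neg_mem h)
        (fun {x y} h => by simpa using T.mul_mem_right _ _ h)
        (fun {x y} h => by simpa using T.mul_mem_left _ _ h)
  have hT' : ∀ a, a ∈ T' ↔ unop (anti a) ∈ T := fun a => by simp [T', TwoSidedIdeal.mem_mk']
  rw [← hT']
  refine (TwoSidedIdeal.mem_span_iff.1 ha) T' ?_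
  rintro _ ⟨x, hx, rfl⟩
  refine (hT' _).2 ?_
  rw [anti_ι, unop_op]
  exact neg_mem (TwoSidedIdeal.subset_span ⟨x, hx, rfl⟩)

open MulOpposite in
lemma anti_comb (W : Set L) (f : W →₀ (UniversalEnvelopingAlgebra F L)ᵐᵒᵖ) :
    unop (anti (Finsupp.linearCombination (UniversalEnvelopingAlgebra F L)ᵐᵒᵖ
      (fun w : W => ι F (w : L)) f)) =
    - Finsupp.linearCombination (UniversalEnvelopingAlgebra F L)
      (fun w : W => ι F (w : L)) (f.mapRange (fun a => unop (anti (unop a))) (by simp)) := by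
  induction f using Finsupp.induction_linear with
  | zero => simp
  | add f h hf hh =>
    rw [Finsupp.mapRange_add (by simp), map_add, map_add, map_add, unop_add, hf, hh]; abel
  | single w a => simp [anti_ι, -ι_apply]

end PBW

open UniversalEnvelopingAlgebra in
/-- **If a Lie ideal `J ⊆ L` is a free Lie algebra on `W`, then the two-sided ideal `(J)` of
`U(L)` is a free left (and right) `U(L)`-module on `ι(W)`.**
Over a field `F`, let `J` be a Lie ideal of a Lie algebra `L` and `W ⊆ J` a subset generating
`J` as a Lie subalgebra, such that the canonical map `FreeLie_F(W) → L` is injective with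
range `J`.  Let `A = U(L)`, `ι : L → A`, and let `I` be the two-sided ideal of `A` generated
by `ι(J)`.  Then the left-multiplication map `⊕_{w ∈ W} A → A`, `(a_w) ↦ Σ a_w * ι(w)`, is an
injective left `A`-module map with image `I`, and the right-multiplication map
`(a_w) ↦ Σ ι(w) * a_w` (an `Aᵐᵒᵖ`-linear, i.e. right `A`-module, map) is injective with
image `I`. -/
theorem stmt_3 (F : Type*) [Field F] (L : Type*) [LieRing L] [LieAlgebra F L]
    (J : LieIdeal F L) (W : Set L)
    (hWJ : W ⊆ (J : Set L))
    (hgen : (J : Set L) ⊆ (LieSubalgebra.lieSpan F L W : Set L))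
    (hinj : Function.Injective ((FreeLieAlgebra.lift F) fun w : W => (w : L)))
    (hrange : ∀ x : L, x ∈ ((FreeLieAlgebra.lift F) fun w : W => (w : L)).range ↔ x ∈ J) :
    Function.Injective
        (Finsupp.linearCombination (UniversalEnvelopingAlgebra F L)
          fun w : W => ι F (w : L)) ∧
    Set.range
        ⇑(Finsupp.linearCombination (UniversalEnvelopingAlgebra F L)
          fun w : W => ι F (w : L)) =
      ((TwoSidedIdeal.span (⇑(ι F (L := L)) '' (J : Set L))) :
        Set (UniversalEnvelopingAlgebra F L)) ∧
    Function.Injective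
        (Finsupp.linearCombination (UniversalEnvelopingAlgebra F L)ᵐᵒᵖ
          fun w : W => ι F (w : L)) ∧
    Set.range
        ⇑(Finsupp.linearCombination (UniversalEnvelopingAlgebra F L)ᵐᵒᵖ
          fun w : W => ι F (w : L)) =
      ((TwoSidedIdeal.span (⇑(ι F (L := L)) '' (J : Set L))) :
        Set (UniversalEnvelopingAlgebra F L)) := by
  obtain ⟨hl1, hl2⟩ := And.intro (PBW.left_inj W hinj) (PBW.left_range J W hWJ hgen)
  refine ⟨hl1, hl2, ?_, ?_⟩
  · rw [injective_iff_map_eq_zero]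
    intro f hf
    have h := PBW.anti_comb W f
    rw [hf, map_zero] at h
    replace h := (map_eq_zero_iff _ hl1).1 (zero_eq_neg.1 h)
    ext w
    have h2 := DFunLike.congr_fun h w
    simp only [Finsupp.mapRange_apply, Finsupp.zero_apply] at h2
    have h3 := PBW.anti_anti (MulOpposite.unop (f w))
    rw [h2, map_zero, MulOpposite.unop_zero] at h3
    rw [Finsupp.zero_apply, ← MulOpposite.unop_eq_zero_iff]
    exact h3.symm
  · apply Set.Subset.antisymm
    · rintro _ ⟨f, rfl⟩
      have h := PBW.anti_comb W f
      rw [← PBW.anti_anti (Finsupp.linearCombination (UniversalEnvelopingAlgebra F L)ᵐᵒᵖ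
        (fun w : W => ι F (w : L)) f), h]
      refine PBW.anti_mem J _ (neg_mem ?_)
      have : ∀ x, x ∈ Set.range ⇑(Finsupp.linearCombination (UniversalEnvelopingAlgebra F L)
          fun w : W => ι F (w : L)) →
          x ∈ TwoSidedIdeal.span (⇑(ι F (L := L)) '' (J : Set L)) := by
        intro x hx
        rw [hl2] at hx
        exact hx
      exact this _ ⟨_, rfl⟩
    · intro a ha
      have h1 := PBW.anti_mem J a ha
      have h2 : MulOpposite.unop (PBW.anti a) ∈
          Set.range ⇑(Finsupp.linearCombination (UniversalEnvelopingAlgebra F L)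
          fun w : W => ι F (w : L)) := by
        rw [hl2]; exact h1
      obtain ⟨f, hf⟩ := h2
      refine ⟨-(f.mapRange (fun a => PBW.anti a) (by simp)), ?_⟩
      have h := PBW.anti_comb W (-(f.mapRange (fun a => PBW.anti a) (by simp)))
      have e : (-(f.mapRange (fun a => PBW.anti a) (by simp))).mapRange
          (fun a => MulOpposite.unop (PBW.anti (MulOpposite.unop a))) (by simp) = -f := by
        ext w
        simp [PBW.anti_anti]
      rw [e, (Finsupp.linearCombination (UniversalEnvelopingAlgebra F L) _).map_neg f,
        neg_neg, hf] at h
      have h' := congrArg (fun x => MulOpposite.unop (PBW.anti x)) h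
      simpa only [PBW.anti_anti] using h'
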